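/- arXiv:2307.01127 — 6 statements merged into one kernel-verified Lean document; each statement's English description precedes it below -/
import Mathlib

section
/- For every δ with 0 < δ < e^{-3/2}, the function F₁ is an N-function: F₁ is continuous on ℝ, convex on ℝ, even, nonnegative, F₁(s) = 0 if and only if s = 0, lim_{t→0} F₁(t)/t = 0, and lim_{t→+∞} F₁(t)/t = +∞. -/
/-!
For `|s| ≥ δ`, `F1 δ s` is the second-order Taylor polynomial at `δ` of `-s² log s`, evaluated at
`|s|`. Hence on `(0, ∞)` the function is continuously differentiable and its derivative `p` is the
tangent-line extension beyond `δ` of `-(2 s log s + s)`. The latter has derivative `-(2 log s + 3)`,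
which is positive exactly for `s < e^(-3/2)`; so for `δ < e^(-3/2)` the derivative `p` increases
from `p(0) = 0` to `+∞`. An even function with such a derivative is an N-function: it is convex, and
convexity gives `p(t/2) / 2 ≤ F(t) / t ≤ p(t)`, whence both limits.
-/

open Filter Topology

noncomputable def F1 (δ s : ℝ) : ℝ :=
  if |s| < δ then -(1/2) * s^2 * Real.log (s^2)
  else -(1/2) * s^2 * (Real.log (δ^2) + 3) + 2*δ*|s| - (1/2)*δ^2

section Calculus

open Set

theorem hasDerivAt_of_eventuallyEq_nhdsLE_nhdsGE {𝕜 E : Type*} [NontriviallyNormedField 𝕜]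
    [LinearOrder 𝕜] [NormedAddCommGroup E] [NormedSpace 𝕜 E] {f g h : 𝕜 → E} {d : E} {a : 𝕜}
    (hg : HasDerivAt g d a) (hh : HasDerivAt h d a) (hfg : f =ᶠ[𝓝[≤] a] g)
    (hfh : f =ᶠ[𝓝[≥] a] h) : HasDerivAt f d a := by
  have hleft : HasDerivWithinAt f d (Iic a) a :=
    hg.hasDerivWithinAt.congr_of_eventuallyEq_of_mem hfg self_mem_Iic
  have hright : HasDerivWithinAt f d (Ici a) a :=
    hh.hasDerivWithinAt.congr_of_eventuallyEq_of_mem hfh self_mem_Ici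
  simpa only [Iic_union_Ici, hasDerivWithinAt_univ] using hleft.union hright

theorem even_apply_abs {α β : Type*} [AddGroup α] [LinearOrder α] {F : α → β}
    (hF : Function.Even F) (s : α) : F |s| = F s := by
  rcases abs_choice s with h | h <;> rw [h]
  exact hF s

theorem convexOn_univ_comp_norm {E : Type*} [SeminormedAddCommGroup E] [NormedSpace ℝ E]
    {F : ℝ → ℝ} (hconv : ConvexOn ℝ (Ici 0) F) (hmono : MonotoneOn F (Ici 0)) :
    ConvexOn ℝ univ fun x : E => F ‖x‖ := by
  refine ⟨convex_univ, fun x _ y _ a b ha hb hab => ?_⟩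
  have hnorm : ‖a • x + b • y‖ ≤ a • ‖x‖ + b • ‖y‖ :=
    convexOn_univ_norm.2 (mem_univ x) (mem_univ y) ha hb hab
  calc F ‖a • x + b • y‖
      ≤ F (a • ‖x‖ + b • ‖y‖) := hmono (norm_nonneg _) ((norm_nonneg _).trans hnorm) hnorm
    _ ≤ a • F ‖x‖ + b • F ‖y‖ := hconv.2 (norm_nonneg x) (norm_nonneg y) ha hb hab

theorem convexOn_of_hasDerivAt_of_monotoneOn {D : Set ℝ} {F p : ℝ → ℝ} (hD : Convex ℝ D)
    (hcont : ContinuousOn F D) (hderiv : ∀ s ∈ interior D, HasDerivAt F (p s) s)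
    (hp : MonotoneOn p (interior D)) : ConvexOn ℝ D F :=
  MonotoneOn.convexOn_of_deriv hD hcont
    (fun s hs => (hderiv s hs).differentiableAt.differentiableWithinAt)
    (hp.congr fun s hs => (hderiv s hs).deriv.symm)

theorem div_le_of_convexOn_of_hasDerivAt {F : ℝ → ℝ} {d t : ℝ} (hconv : ConvexOn ℝ (Ici 0) F)
    (hzero : F 0 = 0) (ht : 0 < t) (hderiv : HasDerivAt F d t) : F t / t ≤ d := by
  simpa only [slope_def_field, hzero, sub_zero] using
    hconv.slope_le_of_hasDerivAt self_mem_Ici ht.le ht hderiv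

theorem half_le_div_of_convexOn_of_hasDerivAt {F : ℝ → ℝ} {d t : ℝ}
    (hconv : ConvexOn ℝ (Ici 0) F) (ht : 0 < t) (hnonneg : 0 ≤ F (t / 2))
    (hderiv : HasDerivAt F d (t / 2)) : d / 2 ≤ F t / t := by
  have hslope : d ≤ (F t - F (t / 2)) / (t - t / 2) := by
    simpa only [slope_def_field] using
      hconv.le_slope_of_hasDerivAt (half_pos ht).le ht.le (half_lt_self ht) hderiv
  rw [sub_half, le_div_iff₀ (half_pos ht)] at hslope
  rw [le_div_iff₀ ht]
  linarith

end Calculus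

/-- An N-function in the sense of Orlicz space theory, as an even function on the whole line.
The limit at `0` is two-sided; the punctured neighbourhood excludes the junk value of `F 0 / 0`. -/
structure IsNFunction (F : ℝ → ℝ) : Prop where
  continuous : Continuous F
  convexOn : ConvexOn ℝ Set.univ F
  even : Function.Even F
  nonneg : ∀ s, 0 ≤ F s
  eq_zero_iff : ∀ s, F s = 0 ↔ s = 0
  tendsto_div_zero : Tendsto (fun t => F t / t) (𝓝[≠] 0) (𝓝 0)
  tendsto_div_atTop : Tendsto (fun t => F t / t) atTop atTop

section Criterion

open Set

variable {F p : ℝ → ℝ}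

theorem tendsto_div_nhdsNE_zero_of_convexOn (heven : Function.Even F) (hzero : F 0 = 0)
    (hconv : ConvexOn ℝ (Ici 0) F) (hnonneg : ∀ s, 0 ≤ F s)
    (hderiv : ∀ s, 0 < s → HasDerivAt F (p s) s) (hp : Tendsto p (𝓝[>] 0) (𝓝 0)) :
    Tendsto (fun t => F t / t) (𝓝[≠] 0) (𝓝 0) := by
  have hright : Tendsto (fun t => F t / t) (𝓝[>] 0) (𝓝 0) := by
    refine tendsto_of_tendsto_of_tendsto_of_le_of_le' tendsto_const_nhds hp ?_ ?_ <;>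
      filter_upwards [self_mem_nhdsWithin] with t ht
    · exact div_nonneg (hnonneg t) (le_of_lt ht)
    · exact div_le_of_convexOn_of_hasDerivAt hconv hzero ht (hderiv t ht)
  refine (tendsto_zero_iff_abs_tendsto_zero _).2 ((hright.comp tendsto_abs_nhdsNE_zero).congr ?_)
  intro t
  simp only [Function.comp_apply, even_apply_abs heven, abs_div, abs_of_nonneg (hnonneg t)]

theorem tendsto_div_atTop_of_convexOn (hconv : ConvexOn ℝ (Ici 0) F)
    (hnonneg : ∀ s, 0 < s → 0 ≤ F s) (hderiv : ∀ s, 0 < s → HasDerivAt F (p s) s)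
    (hp : Tendsto p atTop atTop) : Tendsto (fun t => F t / t) atTop atTop := by
  have hhalf : Tendsto (fun t => p (t / 2) / 2) atTop atTop :=
    (hp.comp (tendsto_id.atTop_div_const two_pos)).atTop_div_const two_pos
  refine tendsto_atTop_mono' _ ?_ hhalf
  filter_upwards [eventually_gt_atTop 0] with t ht
  exact half_le_div_of_convexOn_of_hasDerivAt hconv ht (hnonneg _ (half_pos ht))
    (hderiv _ (half_pos ht))

theorem isNFunction_of_hasDerivAt (hcont : Continuous F) (heven : Function.Even F)
    (hzero : F 0 = 0) (hderiv : ∀ s, 0 < s → HasDerivAt F (p s) s)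
    (hmono : MonotoneOn p (Ioi 0)) (hpos : ∀ s, 0 < s → 0 < p s)
    (hp_zero : Tendsto p (𝓝[>] 0) (𝓝 0)) (hp_top : Tendsto p atTop atTop) :
    IsNFunction F := by
  have hconv : ConvexOn ℝ (Ici 0) F :=
    convexOn_of_hasDerivAt_of_monotoneOn (convex_Ici 0) hcont.continuousOn
      (by simpa only [interior_Ici, mem_Ioi] using hderiv)
      (by simpa only [interior_Ici] using hmono)
  have hF_mono : StrictMonoOn F (Ici 0) := by
    refine strictMonoOn_of_deriv_pos (convex_Ici 0) hcont.continuousOn fun s hs => ?_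
    rw [interior_Ici] at hs
    simpa only [(hderiv s hs).deriv] using hpos s hs
  have hF_pos : ∀ s, s ≠ 0 → 0 < F s := fun s hs => by
    simpa only [hzero, even_apply_abs heven] using
      hF_mono self_mem_Ici (abs_nonneg s) (abs_pos.2 hs)
  have hF_nonneg : ∀ s, 0 ≤ F s := fun s => by
    rcases eq_or_ne s 0 with rfl | hs
    exacts [hzero.ge, (hF_pos s hs).le]
  exact
    { continuous := hcont
      convexOn := by
        simpa only [Real.norm_eq_abs, even_apply_abs heven] using
          convexOn_univ_comp_norm (E := ℝ) hconv hF_mono.monotoneOn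
      even := heven
      nonneg := hF_nonneg
      eq_zero_iff := fun s =>
        ⟨fun h => by_contra fun hs => (hF_pos s hs).ne' h, fun h => h ▸ hzero⟩
      tendsto_div_zero :=
        tendsto_div_nhdsNE_zero_of_convexOn heven hzero hconv hF_nonneg hderiv hp_zero
      tendsto_div_atTop :=
        tendsto_div_atTop_of_convexOn hconv (fun s _ => hF_nonneg s) hderiv hp_top }

end Criterion

section Density

open Set

theorem hasDerivAt_neg_sq_mul_log {s : ℝ} (hs : s ≠ 0) :
    HasDerivAt (fun x => -(x ^ 2 * Real.log x)) (-(2 * s * Real.log s + s)) s := by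
  refine ((hasDerivAt_pow 2 s).mul (Real.hasDerivAt_log hs)).neg.congr_deriv ?_
  norm_num
  field_simp

theorem hasDerivAt_neg_two_mul_mul_log_add_self {s : ℝ} (hs : s ≠ 0) :
    HasDerivAt (fun x => -(2 * x * Real.log x + x)) (-(2 * Real.log s + 3)) s := by
  have h := (((Real.hasDerivAt_mul_log hs).const_mul 2).add (hasDerivAt_id' s)).neg
  simp only [← mul_assoc] at h
  exact h.congr_deriv (by ring)

theorem continuous_neg_sq_mul_log : Continuous fun s : ℝ => -(s ^ 2 * Real.log s) := by
  simp only [sq, mul_assoc]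
  exact (continuous_id'.mul Real.continuous_mul_log).neg

theorem continuous_neg_two_mul_mul_log_add_self :
    Continuous fun s : ℝ => -(2 * s * Real.log s + s) := by
  simp only [mul_assoc]
  exact ((continuous_const.mul Real.continuous_mul_log).add continuous_id').neg

theorem strictMonoOn_neg_two_mul_mul_log_add_self :
    StrictMonoOn (fun s : ℝ => -(2 * s * Real.log s + s)) (Icc 0 (Real.exp (-(3 / 2)))) := by
  refine strictMonoOn_of_deriv_pos (convex_Icc _ _)
    continuous_neg_two_mul_mul_log_add_self.continuousOn fun s hs => ?_
  rw [interior_Icc] at hs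
  rw [(hasDerivAt_neg_two_mul_mul_log_add_self hs.1.ne').deriv]
  have hlog : Real.log s < -(3 / 2) := (Real.log_lt_iff_lt_exp hs.1).2 hs.2
  linarith

/-- The derivative of `F1 δ` on `(0, ∞)`, which plays the role of the density of the N-function.
Its values at negative `s` carry no meaning. -/
noncomputable def F1Density (δ s : ℝ) : ℝ :=
  if s ≤ δ then -(2 * s * Real.log s + s) else -(2 * Real.log δ + 3) * s + 2 * δ

variable {δ s : ℝ}

theorem F1Density_of_le (h : s ≤ δ) : F1Density δ s = -(2 * s * Real.log s + s) :=
  if_pos h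

theorem F1Density_of_ge (h : δ ≤ s) :
    F1Density δ s = -(2 * Real.log δ + 3) * s + 2 * δ := by
  rcases h.eq_or_lt with rfl | h
  · rw [F1Density_of_le le_rfl]
    ring
  · exact if_neg h.not_ge

theorem F1Density_zero (hδ : 0 ≤ δ) : F1Density δ 0 = 0 := by
  simp [F1Density_of_le hδ]

theorem tendsto_F1Density_nhdsGT_zero (hδ : 0 < δ) :
    Tendsto (F1Density δ) (𝓝[>] 0) (𝓝 0) := by
  have hlim := (continuous_neg_two_mul_mul_log_add_self.tendsto 0).mono_left
    (nhdsWithin_le_nhds (s := Ioi 0))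
  simp only [mul_zero, zero_mul, add_zero, neg_zero] at hlim
  refine hlim.congr' ?_
  filter_upwards [Ioo_mem_nhdsGT hδ] with s hs
  exact (F1Density_of_le hs.2.le).symm

theorem neg_two_mul_log_add_three_pos (hδ : 0 < δ) (hδ' : δ < Real.exp (-(3 / 2))) :
    0 < -(2 * Real.log δ + 3) := by
  have hlog : Real.log δ < -(3 / 2) := (Real.log_lt_iff_lt_exp hδ).2 hδ'
  linarith

theorem strictMonoOn_F1Density (hδ : 0 < δ) (hδ' : δ < Real.exp (-(3 / 2))) :
    StrictMonoOn (F1Density δ) (Ici 0) := by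
  have hleft : StrictMonoOn (F1Density δ) (Icc 0 δ) :=
    (strictMonoOn_neg_two_mul_mul_log_add_self.mono (Icc_subset_Icc_right hδ'.le)).congr
      fun s hs => (F1Density_of_le hs.2).symm
  have hright : StrictMonoOn (F1Density δ) (Ici δ) := fun s hs t ht hst => by
    rw [F1Density_of_ge hs, F1Density_of_ge ht]
    gcongr
    exact neg_two_mul_log_add_three_pos hδ hδ'
  simpa only [Icc_union_Ici_eq_Ici hδ.le] using
    hleft.union hright (isGreatest_Icc hδ.le) isLeast_Ici

theorem F1Density_pos (hδ : 0 < δ) (hδ' : δ < Real.exp (-(3 / 2))) (hs : 0 < s) :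
    0 < F1Density δ s := by
  simpa only [F1Density_zero hδ.le] using
    strictMonoOn_F1Density hδ hδ' self_mem_Ici hs.le hs

theorem tendsto_F1Density_atTop (hδ : 0 < δ) (hδ' : δ < Real.exp (-(3 / 2))) :
    Tendsto (F1Density δ) atTop atTop := by
  have hlim : Tendsto (fun s => -(2 * Real.log δ + 3) * s + 2 * δ) atTop atTop :=
    tendsto_atTop_add_const_right _ _
      (tendsto_id.const_mul_atTop (neg_two_mul_log_add_three_pos hδ hδ'))
  refine hlim.congr' ?_
  filter_upwards [eventually_ge_atTop δ] with s hs
  exact (F1Density_of_ge hs).symm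

end Density

section F1

open Set

variable {δ s : ℝ}

theorem F1_of_le_abs (h : δ ≤ |s|) :
    F1 δ s = -(Real.log δ + 3 / 2) * s ^ 2 + 2 * δ * |s| - δ ^ 2 / 2 := by
  rw [F1, if_neg h.not_gt, Real.log_pow]
  push_cast
  ring

theorem F1_of_abs_le (h : |s| ≤ δ) : F1 δ s = -(s ^ 2 * Real.log s) := by
  rcases h.lt_or_eq with h | rfl
  · rw [F1, if_pos h, Real.log_pow]
    push_cast
    ring
  · rw [F1_of_le_abs le_rfl, Real.log_abs, mul_assoc, abs_mul_abs_self, sq_abs]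
    ring

theorem F1_even (δ : ℝ) : Function.Even (F1 δ) := fun s => by
  simp only [F1, abs_neg, neg_sq]

theorem F1_zero (hδ : 0 ≤ δ) : F1 δ 0 = 0 := by
  simp [F1_of_abs_le (abs_zero.trans_le hδ)]

theorem continuous_F1 (δ : ℝ) : Continuous (F1 δ) := by
  have hF1 : F1 δ = fun s => if |s| ≤ δ then -(s ^ 2 * Real.log s)
      else -(Real.log δ + 3 / 2) * s ^ 2 + 2 * δ * |s| - δ ^ 2 / 2 := by
    funext s
    split_ifs with h
    exacts [F1_of_abs_le h, F1_of_le_abs (not_le.1 h).le]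
  rw [hF1]
  refine Continuous.if_le continuous_neg_sq_mul_log (by fun_prop) continuous_abs
    continuous_const fun s hs => ?_
  rw [← F1_of_abs_le hs.le, F1_of_le_abs hs.ge]

theorem hasDerivAt_F1 (hδ : 0 < δ) (hs : 0 < s) : HasDerivAt (F1 δ) (F1Density δ s) s := by
  have hquad : HasDerivAt
      (fun x => -(Real.log δ + 3 / 2) * x ^ 2 + 2 * δ * x - δ ^ 2 / 2)
      (-(2 * Real.log δ + 3) * s + 2 * δ) s := by
    refine ((((hasDerivAt_pow 2 s).const_mul _).add
      ((hasDerivAt_id' s).const_mul _)).sub_const _).congr_deriv ?_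
    norm_num
    ring
  have hlog_eq : ∀ x ∈ Ioc 0 δ, F1 δ x = -(x ^ 2 * Real.log x) := fun x hx =>
    F1_of_abs_le ((abs_of_pos hx.1).trans_le hx.2)
  have hquad_eq : ∀ x ∈ Ici δ,
      F1 δ x = -(Real.log δ + 3 / 2) * x ^ 2 + 2 * δ * x - δ ^ 2 / 2 := fun x hx => by
    have habs : |x| = x := abs_of_pos (hδ.trans_le hx)
    rw [F1_of_le_abs (habs.symm ▸ hx), habs]
  rcases lt_trichotomy s δ with hlt | rfl | hgt
  · rw [F1Density_of_le hlt.le]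
    exact (hasDerivAt_neg_sq_mul_log hs.ne').congr_of_eventuallyEq
      (eventually_of_mem (Ioc_mem_nhds hs hlt) hlog_eq)
  · rw [← F1Density_of_ge le_rfl] at hquad
    have hlog := hasDerivAt_neg_sq_mul_log hs.ne'
    rw [← F1Density_of_le le_rfl] at hlog
    exact hasDerivAt_of_eventuallyEq_nhdsLE_nhdsGE hlog hquad
      (eventually_of_mem (Ioc_mem_nhdsLE hs) hlog_eq)
      (eventually_of_mem self_mem_nhdsWithin hquad_eq)
  · rw [F1Density_of_ge hgt.le]
    exact hquad.congr_of_eventuallyEq (eventually_of_mem (Ici_mem_nhds hgt) hquad_eq)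

theorem isNFunction_F1 (hδ : 0 < δ) (hδ' : δ < Real.exp (-(3 / 2))) : IsNFunction (F1 δ) :=
  isNFunction_of_hasDerivAt (continuous_F1 δ) (F1_even δ) (F1_zero hδ.le)
    (fun _ hs => hasDerivAt_F1 hδ hs)
    ((strictMonoOn_F1Density hδ hδ').monotoneOn.mono Ioi_subset_Ici_self)
    (fun _ hs => F1Density_pos hδ hδ' hs)
    (tendsto_F1Density_nhdsGT_zero hδ) (tendsto_F1Density_atTop hδ hδ')

end F1

theorem stmt1 (δ : ℝ) (hδ : 0 < δ) (hδ' : δ < Real.exp (-(3/2))) :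
    Continuous (F1 δ) ∧
    ConvexOn ℝ Set.univ (F1 δ) ∧
    (∀ s : ℝ, F1 δ (-s) = F1 δ s) ∧
    (∀ s : ℝ, 0 ≤ F1 δ s) ∧
    (∀ s : ℝ, F1 δ s = 0 ↔ s = 0) ∧
    Tendsto (fun t : ℝ => F1 δ t / t) (𝓝[≠] 0) (𝓝 0) ∧
    Tendsto (fun t : ℝ => F1 δ t / t) atTop atTop :=
  have h := isNFunction_F1 hδ hδ'
  ⟨h.continuous, h.convexOn, h.even, h.nonneg, h.eq_zero_iff, h.tendsto_div_zero,
    h.tendsto_div_atTop⟩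
end

section
/- For every δ with 0 < δ < e^{-3/2}, there exists l ∈ (1,2) such that for every s ≠ 0 one has l ≤ F₁'(s)·s / F₁(s) ≤ 2, where F₁' denotes the derivative of F₁. -/
/-!
The defect `2 F₁(s) - s F₁'(s)` is `s ^ 2` for `|s| < δ` and `2 δ |s| - δ ^ 2` beyond, a Huber
function `H`. Since `s F₁'(s) / F₁(s) = 2 - H(s) / F₁(s)` and `H > 0` away from `0`, it suffices to
have `κ H ≤ F₁` with a constant `κ > 1`, and then `l = 2 - 1 / κ` works. As `H(s) ≤ s ^ 2`, the
constant `κ = -(log (δ ^ 2) + 1) / 2` will do, and it exceeds `1` exactly when `δ < exp (-3 / 2)`.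
-/

section Gluing

variable {𝕜 E : Type*} [NontriviallyNormedField 𝕜] [NormedAddCommGroup E] [NormedSpace 𝕜 E]

theorem hasDerivAt_ite {p : 𝕜 → Prop} [DecidablePred p] {f g : 𝕜 → E} {f' : E} {x : 𝕜}
    (hf : HasDerivAt f f' x) (hg : HasDerivAt g f' x) (hfg : f x = g x) :
    HasDerivAt (fun y ↦ if p y then f y else g y) f' x := by
  have on_p : HasDerivWithinAt (fun y ↦ if p y then f y else g y) f' {y | p y} x :=
    hf.hasDerivWithinAt.congr (fun y hy ↦ if_pos hy) (by simp [hfg])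
  have on_compl : HasDerivWithinAt (fun y ↦ if p y then f y else g y) f' {y | p y}ᶜ x :=
    hg.hasDerivWithinAt.congr (fun y hy ↦ if_neg hy) (by simp [hfg])
  simpa using on_p.union on_compl

end Gluing

theorem hasDerivAt_neg_half_sq_mul_log_sq {s : ℝ} (hs : s ≠ 0) :
    HasDerivAt (fun x ↦ -(1 / 2) * x ^ 2 * Real.log (x ^ 2)) (-(Real.log (s ^ 2) + 1) * s) s := by
  have hsq := hasDerivAt_pow 2 s
  refine ((hsq.const_mul (-(1 / 2))).mul (hsq.log (pow_ne_zero 2 hs))).congr_deriv ?_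
  field_simp
  ring

theorem hasDerivAt_quadratic_abs (a b c : ℝ) {s : ℝ} (hs : s ≠ 0) :
    HasDerivAt (fun x ↦ -(1 / 2) * x ^ 2 * a + b * |x| - c) (-a * s + b * SignType.sign s) s := by
  refine (((((hasDerivAt_pow 2 s).const_mul (-(1 / 2))).mul_const a).add
    ((hasDerivAt_abs hs).const_mul b)).sub_const c).congr_deriv ?_
  push_cast
  ring

theorem hasDerivAt_F1_s4 {δ s : ℝ} (hs : s ≠ 0) :
    HasDerivAt (F1 δ)
      (if |s| < δ then -(Real.log (s ^ 2) + 1) * s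
        else -(Real.log (δ ^ 2) + 3) * s + 2 * δ * SignType.sign s) s := by
  have inner := hasDerivAt_neg_half_sq_mul_log_sq hs
  have outer := hasDerivAt_quadratic_abs (Real.log (δ ^ 2) + 3) (2 * δ) (1 / 2 * δ ^ 2) hs
  rcases lt_trichotomy |s| δ with hlt | rfl | hgt
  · rw [if_pos hlt]
    refine inner.congr_of_eventuallyEq ?_
    filter_upwards [continuous_abs.continuousAt.eventually_lt_const hlt] with x hx
    exact if_pos hx
  · rw [if_neg (lt_irrefl _)]
    have slopes_agree : -(Real.log (s ^ 2) + 1) * s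
        = -(Real.log (|s| ^ 2) + 3) * s + 2 * |s| * SignType.sign s := by
      rw [sq_abs, mul_assoc 2, abs_mul_sign]
      ring
    have values_agree : -(1 / 2) * s ^ 2 * Real.log (s ^ 2)
        = -(1 / 2) * s ^ 2 * (Real.log (|s| ^ 2) + 3) + 2 * |s| * |s| - 1 / 2 * |s| ^ 2 := by
      rw [mul_assoc 2, abs_mul_abs_self, sq_abs]
      ring
    exact hasDerivAt_ite (inner.congr_deriv slopes_agree) outer values_agree
  · rw [if_neg hgt.not_gt]
    refine outer.congr_of_eventuallyEq ?_
    filter_upwards [continuous_abs.continuousAt.eventually_const_lt hgt] with x hx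
    exact if_neg hx.not_gt

/-- Twice the Huber loss with threshold `δ`: the parabola `s ^ 2`, continued outside `(-δ, δ)` by
its tangent lines at `±δ`. It is the defect of `F1 δ` in Euler's identity for degree two. -/
noncomputable def huber (δ s : ℝ) : ℝ :=
  if |s| < δ then s ^ 2 else 2 * δ * |s| - δ ^ 2

theorem huber_pos {δ s : ℝ} (hδ : 0 < δ) (hs : s ≠ 0) : 0 < huber δ s := by
  unfold huber
  split_ifs with h
  · positivity
  · nlinarith

theorem huber_le_sq (δ s : ℝ) : huber δ s ≤ s ^ 2 := by
  unfold huber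
  split_ifs
  · exact le_rfl
  · have := two_mul_le_add_sq δ |s|
    rw [sq_abs] at this
    linarith

theorem deriv_F1_mul_self {δ s : ℝ} (hs : s ≠ 0) :
    deriv (F1 δ) s * s = 2 * F1 δ s - huber δ s := by
  rw [(hasDerivAt_F1_s4 hs).deriv, F1, huber]
  split_ifs
  · ring
  · linear_combination 2 * δ * sign_mul_self s

theorem mul_huber_le_F1 {δ : ℝ} (hδ : Real.log (δ ^ 2) ≤ -3) (s : ℝ) :
    -(Real.log (δ ^ 2) + 1) / 2 * huber δ s ≤ F1 δ s := by
  rcases lt_or_ge |s| δ with h | h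
  · have hlog : s ^ 2 * Real.log (s ^ 2) ≤ s ^ 2 * Real.log (δ ^ 2) := by
      rcases eq_or_ne s 0 with rfl | hs
      · simp
      · have : s ^ 2 ≤ δ ^ 2 := sq_le_sq' (neg_le_of_abs_le h.le) (le_of_abs_le h.le)
        gcongr
    rw [huber, F1, if_pos h, if_pos h]
    linarith [sq_nonneg s]
  · have hcoeff : 0 ≤ -(Real.log (δ ^ 2) + 3) / 2 := by linarith
    calc -(Real.log (δ ^ 2) + 1) / 2 * huber δ s
      _ = -(Real.log (δ ^ 2) + 3) / 2 * huber δ s + huber δ s := by ring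
      _ ≤ -(Real.log (δ ^ 2) + 3) / 2 * s ^ 2 + huber δ s := by gcongr; exact huber_le_sq δ s
      _ ≤ -(Real.log (δ ^ 2) + 3) / 2 * s ^ 2 + huber δ s + δ ^ 2 / 2 :=
        le_add_of_nonneg_right (by positivity)
      _ = F1 δ s := by
        rw [huber, F1, if_neg h.not_gt, if_neg h.not_gt]
        ring

theorem stmt4 (δ : ℝ) (hδ : 0 < δ) (hδ' : δ < Real.exp (-(3/2))) :
    ∃ l : ℝ, 1 < l ∧ l < 2 ∧ ∀ s : ℝ, s ≠ 0 →
      l ≤ deriv (F1 δ) s * s / F1 δ s ∧ deriv (F1 δ) s * s / F1 δ s ≤ 2 := by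
  have hlog : Real.log (δ ^ 2) < -3 := by
    have := (Real.log_lt_iff_lt_exp hδ).mpr hδ'
    rw [Real.log_pow]
    push_cast
    linarith
  set κ := -(Real.log (δ ^ 2) + 1) / 2 with κ_eq
  have hκ : 1 < κ := by linarith
  have hκ_pos : 0 < κ := one_pos.trans hκ
  refine ⟨2 - 1 / κ, ?_, ?_, fun s hs ↦ ?_⟩
  · linarith [(div_lt_one hκ_pos).mpr hκ]
  · linarith [one_div_pos.mpr hκ_pos]
  · have hH : 0 < huber δ s := huber_pos hδ hs
    have hκH : κ * huber δ s ≤ F1 δ s := mul_huber_le_F1 hlog.le s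
    have hF : 0 < F1 δ s := (mul_pos hκ_pos hH).trans_le hκH
    have hratio : huber δ s / F1 δ s ≤ 1 / κ := by
      rw [div_le_div_iff₀ hF hκ_pos]
      linarith
    rw [deriv_F1_mul_self hs, sub_div, mul_div_cancel_right₀ _ hF.ne']
    exact ⟨by linarith, by linarith [div_pos hH hF]⟩
end

section
/- For every δ with 0 < δ < e^{-3/2}, the conjugate N-function F̃₁ of F₁, defined by F̃₁(s) = sup{ s·t - F₁(t) : t ≥ 0 } for s ≥ 0, is finite for every s ≥ 0 and satisfies the Δ₂-condition: there exists a constant k > 0 such that F̃₁(2s) ≤ k·F̃₁(s) for every s ≥ 0. -/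
/-- The conjugate N-function (Legendre transform) of `F1 δ`. -/
noncomputable def F1conj (δ s : ℝ) : ℝ :=
  sSup ((fun t => s * t - F1 δ t) '' Set.Ici 0)

/-
If `2 l F(t) ≤ F(l t)` for all `t ≥ 0`, then the conjugate of `F` satisfies the `Δ₂`-condition with
constant `2 l`: substitute `t = l u` in the supremum defining the conjugate at `2 s`.
For `F = F1 δ`, write `F1 δ t = t² (a + φ(δ / t))` with `a = -log δ - 3/2`, which is positive
exactly when `δ < exp (-3/2)`, and with `φ ≥ 0` asymptotically linear at `0` and logarithmic at
infinity. The bound `a t² ≤ F1 δ t` makes the conjugate finite, and since `2 φ(r) ≤ 3 + l φ(r / l)`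
for `l ≥ 2`, the growth condition holds as soon as `(l - 2) a ≥ 3`.
-/

open Real Set

section Conjugate

variable {F : ℝ → ℝ}

lemma bddAbove_image_mul_sub_of_mul_sq_le {a : ℝ} (ha : 0 < a) (hF : ∀ t, 0 ≤ t → a * t ^ 2 ≤ F t)
    (s : ℝ) : BddAbove ((fun t => s * t - F t) '' Ici 0) := by
  refine ⟨s ^ 2 / (4 * a), forall_mem_image.2 fun t ht => ?_⟩
  have hsq : s ^ 2 / (4 * a) - (s * t - a * t ^ 2) = (s - 2 * a * t) ^ 2 / (4 * a) := by
    field_simp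
    ring
  have hnonneg : 0 ≤ (s - 2 * a * t) ^ 2 / (4 * a) := by positivity
  linarith [hF t ht]

lemma sSup_image_mul_sub_le_of_growth {c l s : ℝ} (hc : 0 ≤ c) (hl : 0 < l)
    (hF : ∀ t, 0 ≤ t → c * l * F t ≤ F (l * t))
    (hbdd : BddAbove ((fun t => s * t - F t) '' Ici 0)) :
    sSup ((fun t => c * s * t - F t) '' Ici 0) ≤
      c * l * sSup ((fun t => s * t - F t) '' Ici 0) := by
  refine csSup_le (nonempty_Ici.image _) (forall_mem_image.2 fun t ht => ?_)
  obtain ⟨u, rfl⟩ : ∃ u, t = l * u := ⟨t / l, (mul_div_cancel₀ t hl.ne').symm⟩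
  have hu : 0 ≤ u := nonneg_of_mul_nonneg_right ht hl
  calc c * s * (l * u) - F (l * u)
      ≤ c * l * (s * u - F u) := by linarith [hF u hu]
    _ ≤ c * l * sSup ((fun t => s * t - F t) '' Ici 0) := by
      gcongr
      exact le_csSup hbdd (mem_image_of_mem _ hu)

end Conjugate

lemma log_le_half {x : ℝ} (hx : 0 < x) : log x ≤ x / 2 := by
  rw [log_le_iff_le_exp hx]
  linarith [two_mul_le_exp (x := x / 2)]

/-- The coefficient of `t²` in `F1 δ t` for large `t`. -/
noncomputable def quadCoeff (δ : ℝ) : ℝ := -log δ - 3 / 2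

/-- The function `φ` in the normal form `F1 δ t = t² (quadCoeff δ + φ(δ / t))`, which separates the
quadratic growth of `F1 δ` from its lower-order part. At `t = 0` the factor `t²` hides the junk
value of `δ / 0`. -/
noncomputable def logProfile (r : ℝ) : ℝ :=
  if r ≤ 1 then 2 * r - r ^ 2 / 2 else 3 / 2 + log r

section Profile

variable {r : ℝ}

lemma logProfile_of_le_one (hr : r ≤ 1) : logProfile r = 2 * r - r ^ 2 / 2 := if_pos hr

lemma logProfile_of_one_lt (hr : 1 < r) : logProfile r = 3 / 2 + log r := if_neg hr.not_ge

lemma logProfile_nonneg (hr : 0 ≤ r) : 0 ≤ logProfile r := by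
  rcases le_or_gt r 1 with hr1 | hr1
  · rw [logProfile_of_le_one hr1]
    nlinarith
  · rw [logProfile_of_one_lt hr1]
    linarith [log_pos hr1]

lemma two_mul_log_le_mul_logProfile_div {l : ℝ} (hl : 2 ≤ l) (hr : 0 < r) :
    2 * log r ≤ l * logProfile (r / l) := by
  have hl0 : 0 < l := by linarith
  obtain ⟨x, rfl⟩ : ∃ x, r = l * x := ⟨r / l, (mul_div_cancel₀ r hl0.ne').symm⟩
  have hx : 0 < x := pos_of_mul_pos_right hr hl0.le
  rw [mul_div_cancel_left₀ x hl0.ne']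
  rcases le_or_gt x 1 with hx1 | hx1
  · calc 2 * log (l * x) ≤ l * x := by linarith [log_le_half hr]
      _ ≤ l * logProfile x := by
        rw [logProfile_of_le_one hx1]
        gcongr
        nlinarith
  · calc 2 * log (l * x) = 2 * log l + 2 * log x := by rw [log_mul hl0.ne' hx.ne']; ring
      _ ≤ l + l * log x := by
        gcongr
        · linarith [log_le_half hl0]
        · exact (log_pos hx1).le
      _ ≤ l * logProfile x := by
        rw [logProfile_of_one_lt hx1]
        linarith

lemma two_mul_logProfile_le {l : ℝ} (hl : 2 ≤ l) (hr : 0 ≤ r) :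
    2 * logProfile r ≤ 3 + l * logProfile (r / l) := by
  rcases le_or_gt r 1 with hr1 | hr1
  · have hnonneg : 0 ≤ l * logProfile (r / l) :=
      mul_nonneg (by linarith) (logProfile_nonneg (by positivity))
    rw [logProfile_of_le_one hr1]
    nlinarith
  · rw [logProfile_of_one_lt hr1]
    linarith [two_mul_log_le_mul_logProfile_div hl (zero_lt_one.trans hr1)]

end Profile

section F1

variable {δ t : ℝ}

lemma quadCoeff_pos (hδ : 0 < δ) (hδ' : δ < exp (-(3 / 2))) : 0 < quadCoeff δ := by
  unfold quadCoeff
  linarith [(log_lt_iff_lt_exp hδ).2 hδ']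

lemma F1_eq_sq_mul (hδ : 0 < δ) (ht : 0 ≤ t) :
    F1 δ t = t ^ 2 * (quadCoeff δ + logProfile (δ / t)) := by
  rcases ht.eq_or_lt with rfl | ht
  · simp [F1, hδ]
  unfold F1 quadCoeff
  rw [abs_of_pos ht]
  rcases lt_or_ge t δ with h | h
  · rw [if_pos h, logProfile_of_one_lt ((one_lt_div ht).2 h), log_div hδ.ne' ht.ne', log_pow]
    push_cast
    ring
  · rw [if_neg h.not_gt, logProfile_of_le_one ((div_le_one ht).2 h), log_pow]
    push_cast
    field_simp
    ring

lemma quadCoeff_mul_sq_le_F1 (hδ : 0 < δ) (ht : 0 ≤ t) : quadCoeff δ * t ^ 2 ≤ F1 δ t := by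
  rw [F1_eq_sq_mul hδ ht, mul_comm]
  gcongr
  exact le_add_of_nonneg_right (logProfile_nonneg (by positivity))

lemma two_mul_mul_F1_le_F1_mul {l : ℝ} (hδ : 0 < δ) (hl : 2 ≤ l)
    (hla : 3 ≤ (l - 2) * quadCoeff δ) (ht : 0 ≤ t) : 2 * l * F1 δ t ≤ F1 δ (l * t) := by
  have hl0 : 0 ≤ l := by linarith
  have hdiv : δ / (l * t) = δ / t / l := by rw [mul_comm, div_div]
  rw [F1_eq_sq_mul hδ ht, F1_eq_sq_mul hδ (mul_nonneg hl0 ht), hdiv]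
  have hprofile := two_mul_logProfile_le hl (div_nonneg hδ.le ht)
  calc 2 * l * (t ^ 2 * (quadCoeff δ + logProfile (δ / t)))
      = l * t ^ 2 * (2 * quadCoeff δ + 2 * logProfile (δ / t)) := by ring
    _ ≤ l * t ^ 2 * (l * quadCoeff δ + l * logProfile (δ / t / l)) := by
      gcongr l * t ^ 2 * ?_
      linarith
    _ = (l * t) ^ 2 * (quadCoeff δ + logProfile (δ / t / l)) := by ring

end F1

theorem stmt7 (δ : ℝ) (hδ : 0 < δ) (hδ' : δ < Real.exp (-(3/2))) :
    (∀ s : ℝ, 0 ≤ s → BddAbove ((fun t => s * t - F1 δ t) '' Set.Ici 0)) ∧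
    ∃ k : ℝ, 0 < k ∧ ∀ s : ℝ, 0 ≤ s → F1conj δ (2*s) ≤ k * F1conj δ s := by
  have ha : 0 < quadCoeff δ := quadCoeff_pos hδ hδ'
  have hbdd : ∀ s, BddAbove ((fun t => s * t - F1 δ t) '' Ici 0) :=
    bddAbove_image_mul_sub_of_mul_sq_le ha fun _ => quadCoeff_mul_sq_le_F1 hδ
  obtain ⟨l, hl, hla⟩ : ∃ l : ℝ, 2 ≤ l ∧ 3 ≤ (l - 2) * quadCoeff δ :=
    ⟨2 + 3 / quadCoeff δ, le_add_of_nonneg_right (by positivity), by field_simp; linarith⟩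
  have hl0 : 0 < l := by linarith
  have hgrowth : ∀ t, 0 ≤ t → 2 * l * F1 δ t ≤ F1 δ (l * t) :=
    fun _ => two_mul_mul_F1_le_F1_mul hδ hl hla
  exact ⟨fun s _ => hbdd s, 2 * l, by positivity,
    fun s _ => sSup_image_mul_sub_le_of_growth zero_le_two hl0 hgrowth (hbdd s)⟩
end

section
/- For every δ > 0 and every s ∈ ℝ, one has ((1/2)·F₂'(s)·s - F₂(s)) - ((1/2)·F₁'(s)·s - F₁(s)) = (1/2)·s², where F₁', F₂' denote the derivatives of F₁, F₂. -/
noncomputable def F2 (δ s : ℝ) : ℝ :=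
  if |s| ≤ δ then 0
  else (1/2) * s^2 * Real.log (s^2/δ^2) + 2*δ*|s| - (3/2)*s^2 - (1/2)*δ^2

open Set

section Calculus

variable {𝕜 E F : Type*} [NontriviallyNormedField 𝕜] [NormedAddCommGroup E] [NormedSpace 𝕜 E]
  [NormedAddCommGroup F] [NormedSpace 𝕜 F]

theorem hasDerivAt_sub_smul_of_continuousAt {f : 𝕜 → E} {a : 𝕜} (hf : ContinuousAt f a) :
    HasDerivAt (fun x ↦ (x - a) • f x) (f a) a := by
  refine hasDerivAt_iff_tendsto_slope.2 ((hf.mono_left nhdsWithin_le_nhds).congr' ?_)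
  filter_upwards [self_mem_nhdsWithin] with x hx
  rw [slope_def_module, sub_self, zero_smul, sub_zero, inv_smul_smul₀ (sub_ne_zero.2 hx)]

theorem hasFDerivAt_ite {p : E → Prop} [DecidablePred p] {f g : E → F} {f' : E →L[𝕜] F} {a : E}
    (hf : a ∈ closure {x | p x} → HasFDerivAt f f' a)
    (hg : a ∈ closure {x | ¬p x} → HasFDerivAt g f' a)
    (hfg : a ∈ frontier {x | p x} → f a = g a) :
    HasFDerivAt (fun x ↦ if p x then f x else g x) f' a := by
  have h_eq (h : a ∈ closure {x | p x}) (h' : a ∈ closure {x | ¬p x}) : f a = g a :=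
    hfg (frontier_eq_closure_inter_closure.ge ⟨h, h'⟩)
  have h_left : HasFDerivWithinAt (fun x ↦ if p x then f x else g x) f' {x | p x} a := by
    by_cases ha : a ∈ closure {x | p x}
    · refine (hf ha).hasFDerivWithinAt.congr (fun x hx ↦ if_pos hx) ?_
      split_ifs with hpa
      · rfl
      · exact (h_eq ha (subset_closure hpa)).symm
    · exact .of_notMem_closure ha
  have h_right : HasFDerivWithinAt (fun x ↦ if p x then f x else g x) f' {x | ¬p x} a := by
    by_cases ha : a ∈ closure {x | ¬p x}
    · refine (hg ha).hasFDerivWithinAt.congr (fun x hx ↦ if_neg hx) ?_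
      split_ifs with hpa
      · exact h_eq (subset_closure hpa) ha
      · rfl
    · exact .of_notMem_closure ha
  rw [← hasFDerivWithinAt_univ, ← union_compl_self {x | p x}]
  exact h_left.union h_right

end Calculus

theorem hasDerivAt_half_sq_mul_log_sq (s : ℝ) :
    HasDerivAt (fun x : ℝ ↦ (1 / 2) * x ^ 2 * Real.log (x ^ 2)) (s * Real.log (s ^ 2) + s) s := by
  have h_eq : (fun x : ℝ ↦ (1 / 2) * x ^ 2 * Real.log (x ^ 2)) =
      fun x ↦ x * (x * Real.log x) := by
    funext x
    rw [Real.log_pow]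
    push_cast
    ring
  rw [h_eq]
  rcases eq_or_ne s 0 with rfl | hs
  · simpa using hasDerivAt_sub_smul_of_continuousAt (Real.continuous_mul_log.continuousAt (x := 0))
  · refine ((hasDerivAt_id s).mul (Real.hasDerivAt_mul_log hs)).congr_deriv ?_
    rw [Real.log_pow]
    push_cast
    simp only [id]
    ring

/-- The formula defining `F2 δ` on the outer region `δ < |s|`, taken on all of `ℝ` so that it can
be differentiated at the interface `|s| = δ`. -/
noncomputable def F2Outer (δ s : ℝ) : ℝ :=
  (1 / 2) * s ^ 2 * Real.log (s ^ 2 / δ ^ 2) + 2 * δ * |s| - (3 / 2) * s ^ 2 - (1 / 2) * δ ^ 2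

section

variable {δ s : ℝ}

theorem hasDerivAt_F2Outer (hδ : δ ≠ 0) (hs : s ≠ 0) :
    HasDerivAt (F2Outer δ)
      (s * Real.log (s ^ 2 / δ ^ 2) + 2 * δ * (SignType.sign s : ℝ) - 2 * s) s := by
  have h_sq : HasDerivAt (fun x : ℝ ↦ x ^ 2) (2 * s) s := by simpa using hasDerivAt_pow 2 s
  have h_log := (h_sq.div_const (δ ^ 2)).log (by positivity)
  refine (((((h_sq.const_mul (1 / 2)).mul h_log).add ((hasDerivAt_abs hs).const_mul (2 * δ))).sub
    (h_sq.const_mul (3 / 2))).sub_const ((1 / 2) * δ ^ 2)).congr_deriv ?_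
  field_simp
  ring

theorem log_sq_div_sq_eq_zero_of_abs_eq (h : |s| = δ) : Real.log (s ^ 2 / δ ^ 2) = 0 := by
  rw [← h, sq_abs]
  rcases eq_or_ne s 0 with rfl | hs <;> simp [*]

theorem F2Outer_eq_zero_of_abs_eq (h : |s| = δ) : F2Outer δ s = 0 := by
  rw [F2Outer, log_sq_div_sq_eq_zero_of_abs_eq h, ← h, ← sq_abs s]
  ring

theorem hasDerivAt_F2Outer_of_abs_eq (hδ : δ ≠ 0) (h : |s| = δ) :
    HasDerivAt (F2Outer δ) 0 s := by
  have hs : s ≠ 0 := abs_ne_zero.1 (h ▸ hδ)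
  refine (hasDerivAt_F2Outer hδ hs).congr_deriv ?_
  rw [log_sq_div_sq_eq_zero_of_abs_eq h, ← h]
  linear_combination 2 * abs_mul_sign s

theorem differentiable_F2 (hδ : 0 < δ) : Differentiable ℝ (F2 δ) := by
  intro s
  have h_inner : s ∈ closure {x : ℝ | |x| ≤ δ} → |s| ≤ δ := fun h ↦
    (isClosed_le continuous_abs continuous_const).closure_subset h
  have h_outer : s ∈ closure {x : ℝ | ¬|x| ≤ δ} → δ ≤ |s| := fun h ↦
    closure_lt_subset_le continuous_const continuous_abs (by simpa only [not_le] using h)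
  have h_interface : s ∈ frontier {x : ℝ | |x| ≤ δ} → |s| = δ :=
    fun h ↦ frontier_le_subset_eq continuous_abs continuous_const h
  have h_value (h : s ∈ frontier {x : ℝ | |x| ≤ δ}) : 0 = F2Outer δ s :=
    (F2Outer_eq_zero_of_abs_eq (h_interface h)).symm
  rcases le_or_gt |s| δ with hs | hs
  · refine (hasFDerivAt_ite (fun _ ↦ (hasDerivAt_const s 0).hasFDerivAt) (fun h ↦ ?_)
      h_value).differentiableAt
    exact (hasDerivAt_F2Outer_of_abs_eq hδ.ne' (hs.antisymm (h_outer h))).hasFDerivAt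
  · have hs₀ : s ≠ 0 := abs_pos.1 (hδ.trans hs)
    exact (hasFDerivAt_ite (fun h ↦ absurd (h_inner h) hs.not_ge)
      (fun _ ↦ (hasDerivAt_F2Outer hδ.ne' hs₀).hasFDerivAt) h_value).differentiableAt

theorem F1_eq_F2_sub (hδ : 0 < δ) (s : ℝ) :
    F1 δ s = F2 δ s - (1 / 2) * s ^ 2 * Real.log (s ^ 2) := by
  rcases lt_trichotomy |s| δ with h | h | h
  · rw [F1, F2, if_pos h, if_pos h.le]
    ring
  · rw [F1, F2, if_neg h.not_lt, if_pos h.le, ← h, sq_abs, ← sq_abs s]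
    ring
  · have hs : s ≠ 0 := abs_pos.1 (hδ.trans h)
    rw [F1, F2, if_neg h.not_gt, if_neg h.not_ge, Real.log_div (by positivity) (by positivity)]
    ring

theorem deriv_F1 (hδ : 0 < δ) (s : ℝ) :
    deriv (F1 δ) s = deriv (F2 δ) s - (s * Real.log (s ^ 2) + s) := by
  rw [funext (F1_eq_F2_sub hδ)]
  exact ((differentiable_F2 hδ s).hasDerivAt.sub (hasDerivAt_half_sq_mul_log_sq s)).deriv

end

theorem stmt15 (δ : ℝ) (hδ : 0 < δ) (s : ℝ) :
    ((1/2) * deriv (F2 δ) s * s - F2 δ s) - ((1/2) * deriv (F1 δ) s * s - F1 δ s)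
      = (1/2) * s^2 := by
  rw [deriv_F1 hδ, F1_eq_F2_sub hδ]
  ring
end

section
/- Let N ≥ 1 be an integer and define f : ℝ^N → ℝ by f(x) = 1/(‖x‖^{N/2}·log‖x‖) if ‖x‖ ≥ 3 and f(x) = 0 otherwise. Then f is square-integrable on ℝ^N (with respect to Lebesgue measure), while the function x ↦ f(x)²·log(f(x)²) (with the convention s²·log(s²) = 0 at s = 0) is not integrable; indeed ∫_{‖x‖ ≥ 3} f(x)²·|log(f(x)²)| dx = +∞ and the integral ∫_{ℝ^N} f(x)²·log(f(x)²) dx diverges to -∞. -/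
open MeasureTheory

/-!
In polar coordinates followed by the substitution `s = log ‖x‖`, integrating
`‖x‖ ^ (-d) * g (log ‖x‖)` near infinity in dimension `d` amounts to integrating `g s` near
infinity. Here `f ^ 2` corresponds to `s ^ (-2)`, which is integrable. On the other hand
`-log (f ^ 2) = d * s + 2 * log s` is at least `s` for `s ≥ 1`, so `-f ^ 2 * log (f ^ 2)` dominates
the function corresponding to `s ^ (-1)`, which is not integrable.
-/

section Profile

variable {r : ℝ}

theorem one_div_rpow_half_mul_log_sq (d : ℕ) (hr : 0 ≤ r) :
    (1 / (r ^ ((d : ℝ) / 2) * Real.log r)) ^ 2 = (r ^ d)⁻¹ * (Real.log r ^ 2)⁻¹ := by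
  have hpow : (r ^ ((d : ℝ) / 2)) ^ 2 = r ^ d := by
    rw [← Real.rpow_mul_natCast hr, Nat.cast_ofNat, div_mul_cancel₀ _ two_ne_zero,
      Real.rpow_natCast]
  rw [div_pow, one_pow, one_div, mul_pow, hpow, mul_inv]

theorem log_inv_pow_mul_inv_log_sq_le {d : ℕ} (hd : d ≠ 0) (hr : Real.exp 1 ≤ r) :
    Real.log ((r ^ d)⁻¹ * (Real.log r ^ 2)⁻¹) ≤ -Real.log r := by
  have hr0 : 0 < r := (Real.exp_pos 1).trans_le hr
  have hlog : 1 ≤ Real.log r := (Real.le_log_iff_exp_le hr0).2 hr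
  have hloglog : 0 ≤ Real.log (Real.log r) := Real.log_nonneg hlog
  have hd' : (1 : ℝ) ≤ d := Nat.one_le_cast.2 (Nat.one_le_iff_ne_zero.2 hd)
  calc Real.log ((r ^ d)⁻¹ * (Real.log r ^ 2)⁻¹)
      = -(d * Real.log r + 2 * Real.log (Real.log r)) := by
        rw [← mul_inv, Real.log_inv, Real.log_mul (by positivity) (by positivity), Real.log_pow,
          Real.log_pow, Nat.cast_ofNat]
    _ ≤ -Real.log r := by nlinarith

theorem inv_pow_mul_inv_log_le_neg_mul_log {d : ℕ} (hd : d ≠ 0) (hr : Real.exp 1 ≤ r) :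
    (r ^ d)⁻¹ * (Real.log r)⁻¹ ≤
      -((r ^ d)⁻¹ * (Real.log r ^ 2)⁻¹ * Real.log ((r ^ d)⁻¹ * (Real.log r ^ 2)⁻¹)) := by
  have hr0 : 0 < r := (Real.exp_pos 1).trans_le hr
  have hlog : 0 < Real.log r := zero_lt_one.trans_le ((Real.le_log_iff_exp_le hr0).2 hr)
  calc (r ^ d)⁻¹ * (Real.log r)⁻¹
      = (r ^ d)⁻¹ * (Real.log r ^ 2)⁻¹ * Real.log r := by field_simp
    _ ≤ (r ^ d)⁻¹ * (Real.log r ^ 2)⁻¹ * -Real.log ((r ^ d)⁻¹ * (Real.log r ^ 2)⁻¹) := by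
        gcongr
        exact le_neg_of_le_neg (log_inv_pow_mul_inv_log_sq_le hd hr)
    _ = _ := mul_neg _ _

end Profile

section Radial

variable {E : Type*} [NormedAddCommGroup E] [NormedSpace ℝ E] [FiniteDimensional ℝ E]
  [Nontrivial E] [MeasurableSpace E] [BorelSpace E] (μ : Measure E) [μ.IsAddHaarMeasure]
  {F : Type*} [NormedAddCommGroup F] [NormedSpace ℝ F] {a : ℝ}

theorem integrableOn_norm_ge_iff (g : ℝ → F) (ha : 0 < a) :
    IntegrableOn (fun x => g ‖x‖) {x : E | a ≤ ‖x‖} μ ↔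
      IntegrableOn (fun r => r ^ (Module.finrank ℝ E - 1) • g r) (Set.Ioi a) := by
  have hsub : Set.Ici a ∩ Set.Ioi 0 = Set.Ici a :=
    Set.inter_eq_left.2 fun _ hr => ha.trans_le hr
  have hsmul : (fun r : ℝ => r ^ (Module.finrank ℝ E - 1) • (Set.Ici a).indicator g r) =
      (Set.Ici a).indicator fun r => r ^ (Module.finrank ℝ E - 1) • g r :=
    (Set.indicator_smul _ _ _).symm
  calc IntegrableOn (fun x => g ‖x‖) {x : E | a ≤ ‖x‖} μ
      ↔ Integrable (fun x : E => (Set.Ici a).indicator g ‖x‖) μ :=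
        (integrable_indicator_iff (measurableSet_le measurable_const measurable_norm)).symm
    _ ↔ IntegrableOn (fun r => r ^ (Module.finrank ℝ E - 1) • g r) (Set.Ici a) := by
        rw [integrable_fun_norm_addHaar μ, hsmul, integrableOn_indicator_iff measurableSet_Ici,
          hsub]
    _ ↔ _ := by rw [integrableOn_Ici_iff_integrableOn_Ioi]

theorem integrableOn_inv_norm_pow_finrank_smul_log_iff (g : ℝ → F) (ha : 0 < a) :
    IntegrableOn (fun x => (‖x‖ ^ Module.finrank ℝ E)⁻¹ • g (Real.log ‖x‖)) {x : E | a ≤ ‖x‖} μ ↔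
      IntegrableOn g (Set.Ioi (Real.log a)) := by
  rw [integrableOn_norm_ge_iff μ (fun r => (r ^ Module.finrank ℝ E)⁻¹ • g (Real.log r)) ha,
    ← integrableOn_comp_log_Ioi g ha]
  refine integrableOn_congr_fun (fun r hr => ?_) measurableSet_Ioi
  have hr : r ≠ 0 := (ha.trans hr).ne'
  have hpow : r ^ Module.finrank ℝ E = r ^ (Module.finrank ℝ E - 1) * r := by
    rw [← pow_succ, Nat.sub_add_cancel Module.finrank_pos]
  rw [smul_smul, hpow, mul_inv, mul_inv_cancel_left₀ (pow_ne_zero _ hr)]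

theorem integrableOn_inv_norm_pow_finrank_mul_inv_log_sq (ha : 1 < a) :
    IntegrableOn (fun x => (‖x‖ ^ Module.finrank ℝ E)⁻¹ * (Real.log ‖x‖ ^ 2)⁻¹)
      {x : E | a ≤ ‖x‖} μ := by
  have hint : IntegrableOn (fun s : ℝ => s ^ (-2 : ℝ)) (Set.Ioi (Real.log a)) :=
    integrableOn_Ioi_rpow_of_lt (by norm_num) (Real.log_pos ha)
  have hint' : IntegrableOn (fun s : ℝ => (s ^ 2)⁻¹) (Set.Ioi (Real.log a)) :=
    hint.congr_fun (fun s hs => by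
      simp [Real.rpow_neg ((Real.log_pos ha).trans hs).le]) measurableSet_Ioi
  exact (integrableOn_inv_norm_pow_finrank_smul_log_iff μ _ (zero_lt_one.trans ha)).2 hint'

theorem setLIntegral_inv_norm_pow_finrank_mul_inv_log_eq_top (ha : 1 ≤ a) :
    ∫⁻ x in {x : E | a ≤ ‖x‖},
      ENNReal.ofReal ((‖x‖ ^ Module.finrank ℝ E)⁻¹ * (Real.log ‖x‖)⁻¹) ∂μ = ⊤ := by
  by_contra hfin
  refine not_integrableOn_Ioi_inv <|
    (integrableOn_inv_norm_pow_finrank_smul_log_iff μ (·⁻¹) (zero_lt_one.trans_le ha)).1 <|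
    (lintegral_ofReal_ne_top_iff_integrable ?_ ?_).1 hfin
  · exact Measurable.aestronglyMeasurable (by fun_prop)
  · filter_upwards [ae_restrict_mem
      (measurableSet_le measurable_const measurable_norm)] with x hx
    have hlog : 0 ≤ Real.log ‖x‖ := Real.log_nonneg (ha.trans hx)
    exact mul_nonneg (by positivity) (inv_nonneg.2 hlog)

theorem setLIntegral_neg_mul_log_eq_top {u : E → ℝ}
    (hu : ∀ x, a ≤ ‖x‖ → u x = (‖x‖ ^ Module.finrank ℝ E)⁻¹ * (Real.log ‖x‖ ^ 2)⁻¹) :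
    ∫⁻ x in {x : E | a ≤ ‖x‖}, ENNReal.ofReal (-(u x * Real.log (u x))) ∂μ = ⊤ := by
  set b := max a (Real.exp 1)
  have hb : 1 ≤ b := (Real.one_le_exp zero_le_one).trans (le_max_right _ _)
  refine top_unique ?_
  calc ⊤ = ∫⁻ x in {x : E | b ≤ ‖x‖},
          ENNReal.ofReal ((‖x‖ ^ Module.finrank ℝ E)⁻¹ * (Real.log ‖x‖)⁻¹) ∂μ :=
        (setLIntegral_inv_norm_pow_finrank_mul_inv_log_eq_top μ hb).symm
    _ ≤ ∫⁻ x in {x : E | b ≤ ‖x‖}, ENNReal.ofReal (-(u x * Real.log (u x))) ∂μ := by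
        refine setLIntegral_mono' (measurableSet_le measurable_const measurable_norm) fun x hx =>
          ENNReal.ofReal_le_ofReal ?_
        rw [hu x ((le_max_left _ _).trans hx)]
        exact inv_pow_mul_inv_log_le_neg_mul_log Module.finrank_pos.ne'
          ((le_max_right _ _).trans hx)
    _ ≤ ∫⁻ x in {x : E | a ≤ ‖x‖}, ENNReal.ofReal (-(u x * Real.log (u x))) ∂μ :=
        lintegral_mono_set fun x (hx : b ≤ ‖x‖) => (le_max_left _ _).trans hx

end Radial

theorem stmt18_general {E : Type*} [NormedAddCommGroup E] [NormedSpace ℝ E]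
    [FiniteDimensional ℝ E] [Nontrivial E] [MeasurableSpace E] [BorelSpace E] (μ : Measure E)
    [μ.IsAddHaarMeasure] {a : ℝ} (ha : 1 < a) (f : E → ℝ)
    (hf : ∀ x, f x =
      if a ≤ ‖x‖ then 1 / (‖x‖ ^ ((Module.finrank ℝ E : ℝ) / 2) * Real.log ‖x‖) else 0) :
    Integrable (fun x => f x ^ 2) μ ∧
    ¬ Integrable (fun x => f x ^ 2 * Real.log (f x ^ 2)) μ ∧
    (∫⁻ x in {x : E | a ≤ ‖x‖}, ENNReal.ofReal (f x ^ 2 * |Real.log (f x ^ 2)|) ∂μ) = ⊤ ∧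
    (∫⁻ x, ENNReal.ofReal (-(f x ^ 2 * Real.log (f x ^ 2))) ∂μ) = ⊤ := by
  have hsq : ∀ x, a ≤ ‖x‖ → f x ^ 2 = (‖x‖ ^ Module.finrank ℝ E)⁻¹ * (Real.log ‖x‖ ^ 2)⁻¹ :=
    fun x hx => by rw [hf x, if_pos hx, one_div_rpow_half_mul_log_sq _ (norm_nonneg x)]
  have hsupp : Function.support (fun x => f x ^ 2) ⊆ {x : E | a ≤ ‖x‖} := fun x => by
    contrapose!
    intro (hxa : ¬a ≤ ‖x‖)
    rw [Function.notMem_support, hf x, if_neg hxa, zero_pow two_ne_zero]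
  have htop := setLIntegral_neg_mul_log_eq_top μ hsq
  have htop' : ∫⁻ x, ENNReal.ofReal (-(f x ^ 2 * Real.log (f x ^ 2))) ∂μ = ⊤ :=
    top_unique (htop.ge.trans (setLIntegral_le_lintegral _ _))
  refine ⟨?_, fun hint => hint.neg.lintegral_lt_top.ne htop', ?_, htop'⟩
  · exact (integrableOn_iff_integrable_of_support_subset hsupp).1 <|
      (integrableOn_inv_norm_pow_finrank_mul_inv_log_sq μ ha).congr_fun
        (fun x hx => (hsq x hx).symm) (measurableSet_le measurable_const measurable_norm)
  · refine top_unique (htop.ge.trans (lintegral_mono fun x => ENNReal.ofReal_le_ofReal ?_))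
    rw [← mul_neg]
    exact mul_le_mul_of_nonneg_left (neg_le_abs _) (sq_nonneg _)

theorem stmt18 (N : ℕ) (hN : 1 ≤ N) (f : EuclideanSpace ℝ (Fin N) → ℝ)
    (hf : ∀ x, f x =
      if 3 ≤ ‖x‖ then 1 / (‖x‖ ^ ((N : ℝ) / 2) * Real.log ‖x‖) else 0) :
    Integrable (fun x => f x ^ 2) ∧
    ¬ Integrable (fun x => f x ^ 2 * Real.log (f x ^ 2)) ∧
    (∫⁻ x in {x : EuclideanSpace ℝ (Fin N) | 3 ≤ ‖x‖},
        ENNReal.ofReal (f x ^ 2 * |Real.log (f x ^ 2)|)) = ⊤ ∧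
    (∫⁻ x, ENNReal.ofReal (-(f x ^ 2 * Real.log (f x ^ 2)))) = ⊤ := by
  have : Nonempty (Fin N) := ⟨⟨0, hN⟩⟩
  exact stmt18_general volume (by norm_num) f (by simpa only [finrank_euclideanSpace_fin] using hf)
end

section
/- Let N ≥ 1, μ ∈ ℝ, and let φ : ℝ^N → ℝ be a smooth, compactly supported function that is not identically zero. Then the function t ↦ (t²/2)·∫_{ℝ^N} (‖∇φ(x)‖² + (μ+1)·φ(x)²) dx - (1/2)·∫_{ℝ^N} (t·φ(x))²·log((t·φ(x))²) dx tends to -∞ as t → +∞. In particular, for every fixed μ the values of this expression become smaller than -1 for all sufficiently large t. -/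
open MeasureTheory Filter

/-!
Replacing a function `f` by `c * f` turns `∫ f * log f` into `c * ∫ f * log f + c * log c * ∫ f`.
When `∫ f > 0` the last term dominates every multiple of `c` as `c → ∞`, so the logarithmic part of
the energy wins over the quadratic one, whatever the size of the latter. With `f = φ ^ 2` and
`c = t ^ 2` this is the behaviour of the energy along the ray `t * φ`.
-/

theorem mul_mul_log_mul (x y : ℝ) :
    x * y * Real.log (x * y) = x * Real.log x * y + x * (y * Real.log y) := by
  have h := Real.negMulLog_mul x y
  simp only [Real.negMulLog] at h
  linarith

theorem integrable_sq_mul_log_sq_of_hasCompactSupport {X : Type*} [TopologicalSpace X]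
    [MeasurableSpace X] [OpensMeasurableSpace X] {ν : Measure X} [IsFiniteMeasureOnCompacts ν]
    {u : X → ℝ} (hu : Continuous u) (hsupp : HasCompactSupport u) :
    Integrable (fun x => u x ^ 2 * Real.log (u x ^ 2)) ν := by
  have hcont : Continuous fun x => u x ^ 2 * Real.log (u x ^ 2) :=
    Real.continuous_mul_log.comp (hu.pow 2)
  refine hcont.integrable_of_hasCompactSupport ?_
  exact hsupp.comp_left (g := fun s : ℝ => s ^ 2 * Real.log (s ^ 2)) (by simp)

section LogIntegral

variable {X : Type*} [MeasurableSpace X] {ν : Measure X} {f : X → ℝ}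

theorem integral_const_mul_mul_log (hf : Integrable f ν)
    (hlog : Integrable (fun x => f x * Real.log (f x)) ν) (c : ℝ) :
    ∫ x, c * f x * Real.log (c * f x) ∂ν
      = c * Real.log c * (∫ x, f x ∂ν) + c * ∫ x, f x * Real.log (f x) ∂ν := by
  simp only [mul_mul_log_mul]
  rw [integral_add (hf.const_mul _) (hlog.const_mul _), integral_const_mul, integral_const_mul]

theorem tendsto_mul_sub_integral_mul_log_atBot (hf : Integrable f ν)
    (hlog : Integrable (fun x => f x * Real.log (f x)) ν) (hpos : 0 < ∫ x, f x ∂ν) (a : ℝ) :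
    Tendsto (fun c : ℝ => c * a - ∫ x, c * f x * Real.log (c * f x) ∂ν) atTop atBot := by
  have hfactor (c : ℝ) : c * a - ∫ x, c * f x * Real.log (c * f x) ∂ν
      = c * (a - (∫ x, f x * Real.log (f x) ∂ν) + -(∫ x, f x ∂ν) * Real.log c) := by
    rw [integral_const_mul_mul_log hf hlog]
    ring
  have hbracket : Tendsto (fun c : ℝ =>
      a - (∫ x, f x * Real.log (f x) ∂ν) + -(∫ x, f x ∂ν) * Real.log c) atTop atBot :=
    tendsto_atBot_add_const_left _ _
      (Real.tendsto_log_atTop.const_mul_atTop_of_neg (neg_neg_of_pos hpos))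
  simpa only [hfactor, id_eq] using tendsto_id.atTop_mul_atBot₀ hbracket

theorem integral_sq_pos_of_not_ae_eq_zero {u : X → ℝ} (hu : Integrable (fun x => u x ^ 2) ν)
    (hne : ¬ u =ᵐ[ν] 0) : 0 < ∫ x, u x ^ 2 ∂ν := by
  refine (integral_nonneg fun x => sq_nonneg (u x)).lt_of_ne' fun hzero => hne ?_
  filter_upwards [(integral_eq_zero_iff_of_nonneg (fun x => sq_nonneg (u x)) hu).mp hzero]
    with x hx using (pow_eq_zero_iff two_ne_zero).mp hx

-- The quadratic part of the energy enters only through its value `a` at `u`; for `u` on `ℝ^N` this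
-- value is `∫ (‖∇u‖ ^ 2 + (μ + 1) * u ^ 2)`.
theorem stmt19_general {u : X → ℝ} (hu : MemLp u 2 ν)
    (hlog : Integrable (fun x => u x ^ 2 * Real.log (u x ^ 2)) ν) (hne : ¬ u =ᵐ[ν] 0) (a : ℝ) :
    Tendsto (fun t : ℝ =>
        (t ^ 2 / 2) * a - (1 / 2) * ∫ x, (t * u x) ^ 2 * Real.log ((t * u x) ^ 2) ∂ν)
      atTop atBot := by
  have hsq : Integrable (fun x => u x ^ 2) ν := hu.integrable_sq
  have hpos : 0 < ∫ x, u x ^ 2 ∂ν := integral_sq_pos_of_not_ae_eq_zero hsq hne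
  have hray := ((tendsto_mul_sub_integral_mul_log_atBot hsq hlog hpos a).comp
    (tendsto_pow_atTop two_ne_zero)).const_mul_atBot (one_half_pos (α := ℝ))
  refine hray.congr fun t => ?_
  simp only [Function.comp_apply, mul_pow]
  ring

end LogIntegral

theorem stmt19 (N : ℕ) (hN : 1 ≤ N) (μ : ℝ) (φ : EuclideanSpace ℝ (Fin N) → ℝ)
    (hsmooth : ContDiff ℝ (⊤ : ℕ∞) φ) (hsupp : HasCompactSupport φ) (hne : φ ≠ 0) :
    Tendsto (fun t : ℝ =>
        (t ^ 2 / 2) * (∫ x, (‖gradient φ x‖ ^ 2 + (μ + 1) * φ x ^ 2))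
          - (1 / 2) * (∫ x, (t * φ x) ^ 2 * Real.log ((t * φ x) ^ 2)))
      atTop atBot ∧
    ∃ T : ℝ, ∀ t : ℝ, T ≤ t →
      (t ^ 2 / 2) * (∫ x, (‖gradient φ x‖ ^ 2 + (μ + 1) * φ x ^ 2))
        - (1 / 2) * (∫ x, (t * φ x) ^ 2 * Real.log ((t * φ x) ^ 2)) < -1 := by
  have hcont : Continuous φ := hsmooth.continuous
  have hlim := stmt19_general (hcont.memLp_of_hasCompactSupport hsupp)
    (integrable_sq_mul_log_sq_of_hasCompactSupport hcont hsupp)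
    (hne ∘ (hcont.ae_eq_iff_eq volume continuous_zero).mp)
    (∫ x, (‖gradient φ x‖ ^ 2 + (μ + 1) * φ x ^ 2))
  exact ⟨hlim, eventually_atTop.mp (hlim.eventually_lt_atBot (-1))⟩
end
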